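/- Let A be an n×n complex matrix with Ind(A) = k and rank(A^k) = rank((A^k)~ A^k), let A = Â₁ + Â₂ be its m-core-EP decomposition, and let X be the m-core-EP inverse of A. Then Â₁ = A X A and Â₂ = A − A X A. -/

import Mathlib

/-!
The matrices `A₁` and `A ^ k` have the same column space: `A₂ * A₁ = 0` and `A₂ ^ k = 0` give
`A ^ k = A₁ * W`, while `rank (A₁ ^ 2) = rank A₁` together with `A * A₁ = A₁ ^ 2` gives
`A₁ = A ^ (k + 1) * V`. The first factorization and the self-adjointness of `A * X` show that
`A * X` equals `T~ * A₁~` for some `T`, hence kills `A₂`; the second and `X * A ^ (k + 1) = A ^ k`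
show that `A * X` fixes `A₁`. Therefore `A * X * A = A * X * A₁ + A * X * A₂ = A₁`.
-/

open Matrix

noncomputable section

/-- The Minkowski metric matrix `G = diag(1, -1, …, -1)`. -/
def mink (n : ℕ) : Matrix (Fin n) (Fin n) ℂ :=
  Matrix.diagonal (fun i => if (i : ℕ) = 0 then 1 else -1)

/-- The Minkowski adjoint `A~ = G A* G`. -/
def madj {n : ℕ} (A : Matrix (Fin n) (Fin n) ℂ) : Matrix (Fin n) (Fin n) ℂ :=
  mink n * Aᴴ * mink n

/-- `k` is the index of `A`: the smallest positive integer with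
`rank (A^(k+1)) = rank (A^k)`. -/
def IsInd {n : ℕ} (A : Matrix (Fin n) (Fin n) ℂ) (k : ℕ) : Prop :=
  0 < k ∧ (A ^ (k + 1)).rank = (A ^ k).rank ∧
    ∀ j, 0 < j → (A ^ (j + 1)).rank = (A ^ j).rank → k ≤ j

/-- `X` is an m-core-EP inverse of `A` (with `Ind(A) = k`). -/
def IsMCoreEP {n : ℕ} (A X : Matrix (Fin n) (Fin n) ℂ) (k : ℕ) : Prop :=
  X * A * X = X ∧ X * A ^ (k + 1) = A ^ k ∧ madj (A * X) = A * X ∧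
    ∃ Z : Matrix (Fin n) (Fin n) ℂ, X = A ^ k * Z

/-- `A = A₁ + A₂` is an m-core-EP decomposition of `A` (with `Ind(A) = k`). -/
def IsMCoreEPDecomp {n : ℕ} (A A₁ A₂ : Matrix (Fin n) (Fin n) ℂ) (k : ℕ) : Prop :=
  A = A₁ + A₂ ∧ (A₁ ^ 2).rank = A₁.rank ∧ (madj A₁ * A₁).rank = A₁.rank ∧
    A₂ ^ k = 0 ∧ madj A₁ * A₂ = 0 ∧ A₂ * A₁ = 0

lemma mink_mul_mink (n : ℕ) : mink n * mink n = 1 := by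
  rw [mink, diagonal_mul_diagonal, ← diagonal_one]
  congr 1
  funext i
  split_ifs <;> norm_num

lemma madj_mul {n : ℕ} (A B : Matrix (Fin n) (Fin n) ℂ) :
    madj (A * B) = madj B * madj A := by
  simp only [madj, conjTranspose_mul]
  calc mink n * (Bᴴ * Aᴴ) * mink n = mink n * Bᴴ * 1 * Aᴴ * mink n := by
        simp only [mul_assoc, one_mul]
    _ = _ := by rw [← mink_mul_mink]; simp only [mul_assoc]

/-- If `B ^ 2` has the same rank as `B`, the two column spaces agree, so `B` factors
through `B ^ 2` on the left. -/
lemma exists_eq_sq_mul {n : ℕ} (B : Matrix (Fin n) (Fin n) ℂ) (h : (B ^ 2).rank = B.rank) :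
    ∃ Y, B = B ^ 2 * Y := by
  have hle : LinearMap.range (B ^ 2).mulVecLin ≤ LinearMap.range B.mulVecLin := by
    rw [pow_two, mulVecLin_mul]
    exact LinearMap.range_comp_le_range _ _
  have heq := Submodule.eq_of_le_of_finrank_eq hle h
  have hcol : ∀ j, ∃ y, (B ^ 2) *ᵥ y = B.col j := by
    intro j
    have hj : B.col j ∈ LinearMap.range B.mulVecLin := ⟨Pi.single j 1, by simp⟩
    rw [← heq] at hj
    exact hj
  choose y hy using hcol
  refine ⟨Matrix.of fun i j => y j i, ?_⟩
  ext i j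
  exact (congrFun (hy j) i).symm

lemma exists_eq_pow_mul {n : ℕ} (B : Matrix (Fin n) (Fin n) ℂ) (h : (B ^ 2).rank = B.rank)
    (j : ℕ) : ∃ Y, B = B ^ (j + 1) * Y := by
  induction j with
  | zero => exact ⟨1, by simp⟩
  | succ j ih =>
    obtain ⟨Y, hY⟩ := ih
    obtain ⟨V, hV⟩ := exists_eq_sq_mul B h
    refine ⟨Y * V, ?_⟩
    calc B = B * B * V := by rw [← pow_two]; exact hV
      _ = B * (B ^ (j + 1) * Y) * V := by rw [← hY]
      _ = _ := by rw [pow_succ' B (j + 1)]; simp only [mul_assoc]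

lemma add_pow_mul_left {n : ℕ} {B C : Matrix (Fin n) (Fin n) ℂ} (h : C * B = 0) (j : ℕ) :
    (B + C) ^ j * B = B ^ (j + 1) := by
  induction j with
  | zero => simp
  | succ j ih =>
    rw [pow_succ', mul_assoc, ih, add_mul, pow_succ' B j, ← mul_assoc C, h, zero_mul, add_zero,
      ← pow_succ', ← pow_succ']

lemma exists_add_pow_eq {n : ℕ} {B C : Matrix (Fin n) (Fin n) ℂ} (h : C * B = 0) (j : ℕ) :
    ∃ W, (B + C) ^ j = B * W + C ^ j := by
  induction j with
  | zero => exact ⟨0, by simp⟩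
  | succ j ih =>
    obtain ⟨W, hW⟩ := ih
    refine ⟨B * W + C ^ j, ?_⟩
    rw [pow_succ', hW, add_mul, mul_add C, ← mul_assoc C, h, zero_mul, zero_add, ← pow_succ']

/-- In the m-core-EP decomposition, `Â₁ = A X A` and `Â₂ = A - A X A`, where `X`
is the m-core-EP inverse of `A`. -/
theorem mCoreEPDecomp_eq_mCoreEP {n k : ℕ}
    (A A₁ A₂ X : Matrix (Fin n) (Fin n) ℂ) (hk : IsInd A k)
    (hrk : (A ^ k).rank = (madj (A ^ k) * A ^ k).rank)
    (hdec : IsMCoreEPDecomp A A₁ A₂ k)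
    (hX : IsMCoreEP A X k) :
    A₁ = A * X * A ∧ A₂ = A - A * X * A := by
  obtain ⟨rfl, hr, -, hnil, horth, h21⟩ := hdec
  obtain ⟨-, hXk, hself, Z, hZ⟩ := hX
  set A := A₁ + A₂ with hA
  have hfix : A * X * A₁ = A₁ := by
    obtain ⟨Y, hY⟩ := exists_eq_pow_mul A₁ hr (k + 1)
    have hY' : A₁ = A ^ (k + 1) * (A₁ * Y) := by
      rw [← mul_assoc, hA, add_pow_mul_left h21]; exact hY
    calc A * X * A₁ = A * X * (A ^ (k + 1) * (A₁ * Y)) := by rw [← hY']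
      _ = A * (X * A ^ (k + 1)) * (A₁ * Y) := by simp only [mul_assoc]
      _ = A₁ := by rw [hXk, ← pow_succ', ← hY']
  have hkill : A * X * A₂ = 0 := by
    obtain ⟨W, hW⟩ := exists_add_pow_eq h21 (k + 1)
    rw [← hA, pow_succ A₂, hnil, zero_mul, add_zero] at hW
    have hAX : A * X = A₁ * (W * Z) := by
      rw [hZ, ← mul_assoc, ← pow_succ', hW, mul_assoc]
    rw [← hself, hAX, madj_mul, mul_assoc, horth, mul_zero]
  have hmain : A₁ = A * X * A := by
    conv_rhs => rw [hA, mul_add, ← hA, hfix, hkill, add_zero]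
  refine ⟨hmain, ?_⟩
  rw [← hmain, hA, add_sub_cancel_left]
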